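/- arXiv:2510.11657 — 4 statements merged into one kernel-verified Lean document; each statement's English description precedes it below -/
import Mathlib

section
/- Let (Ω, F, P) be a probability space, d ≥ 1, let X : Ω → ℝ^d be a random vector with E‖X‖² < ∞, and let Π : ℝ^d → ℝ^{d×d} be a Borel measurable matrix field with E‖Π(X)‖_F² < ∞ (Frobenius norm). If E[(DΦ)(X) : Π(X)] = 0 for every smooth compactly supported vector field Φ : ℝ^d → ℝ^d, where A : B = Tr(AᵀB) denotes the Frobenius inner product and (DΦ)(x) is the Jacobian of Φ at x, then E[Tr Π(X)] = 0. -/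
open Set MeasureTheory

/-- If `E‖X‖² < ∞`, `E‖Π(X)‖_F² < ∞`, and `E[(DΦ)(X) : Π(X)] = 0` for every
smooth compactly supported vector field `Φ`, then `E[Tr Π(X)] = 0`. -/
theorem expected_trace_zero_of_weak_divergence_free
    {Ω : Type*} [MeasurableSpace Ω] (P : Measure Ω) [IsProbabilityMeasure P]
    (d : ℕ) (hd : 1 ≤ d)
    (X : Ω → EuclideanSpace ℝ (Fin d)) (hXmeas : Measurable X)
    (hX2 : Integrable (fun ω => ‖X ω‖ ^ 2) P)
    (Pmat : EuclideanSpace ℝ (Fin d) → Matrix (Fin d) (Fin d) ℝ)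
    (hPmeas : ∀ i j : Fin d, Measurable fun x => Pmat x i j)
    (hP2 : Integrable (fun ω => ∑ i, ∑ j, (Pmat (X ω) i j) ^ 2) P)
    (hweak : ∀ Φ : EuclideanSpace ℝ (Fin d) → EuclideanSpace ℝ (Fin d),
        ContDiff ℝ (⊤ : ℕ∞) Φ → HasCompactSupport Φ →
        ∫ ω, (∑ i, ∑ j,
            fderiv ℝ (fun y => Φ y j) (X ω) (EuclideanSpace.single i 1)
              * Pmat (X ω) i j) ∂P = 0) :
    ∫ ω, (∑ i, Pmat (X ω) i i) ∂P = 0 := by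
  classical
  let f : ContDiffBump (0 : EuclideanSpace ℝ (Fin d)) := ⟨1, 2, one_pos, one_lt_two⟩
  let Ψ : EuclideanSpace ℝ (Fin d) → EuclideanSpace ℝ (Fin d) := fun x => f x • x
  have hΨ : ContDiff ℝ (⊤ : ℕ∞) Ψ := f.contDiff.smul contDiff_id
  have hΨs : HasCompactSupport Ψ := f.hasCompactSupport.smul_right
  have hΨj : ∀ j, ContDiff ℝ (⊤ : ℕ∞) (fun y => Ψ y j) := fun j => by
    exact (EuclideanSpace.proj (𝕜 := ℝ) j).contDiff.comp hΨ
  have hΨsj : ∀ j, HasCompactSupport (fun y => Ψ y j) := fun j =>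
    hΨs.comp_left (g := fun z : EuclideanSpace ℝ (Fin d) => z j) rfl
  let G : Fin d → EuclideanSpace ℝ (Fin d) → (EuclideanSpace ℝ (Fin d) →L[ℝ] ℝ) :=
    fun j x => fderiv ℝ (fun y => Ψ y j) x
  have hG : ∀ j, Continuous (G j) := fun j => (hΨj j).continuous_fderiv (by simp)
  have hGb : ∀ j, ∃ C, ∀ x, ‖G j x‖ ≤ C := fun j =>
    ((hΨsj j).fderiv (𝕜 := ℝ)).exists_bound_of_continuous (hG j)
  choose C hC using hGb
  have hG0 : ∀ i j, G j 0 (EuclideanSpace.single i 1) = if j = i then 1 else 0 := by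
    intro i j
    have h1 : (fun y => Ψ y j) =ᶠ[nhds 0] (fun y => EuclideanSpace.proj (𝕜 := ℝ) j y) := by
      filter_upwards [f.eventuallyEq_one] with y hy
      simp [Ψ, hy]
    have h2 : G j 0 = EuclideanSpace.proj (𝕜 := ℝ) j := by
      simp only [G]
      rw [h1.fderiv_eq]
      exact ContinuousLinearMap.fderiv _
    rw [h2]
    simp [Pi.single_apply]
  have hPm : ∀ i j, Measurable fun ω => Pmat (X ω) i j := fun i j => (hPmeas i j).comp hXmeas
  have hPi : ∀ i j, Integrable (fun ω => Pmat (X ω) i j) P := by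
    intro i j
    have h2 : Integrable (fun ω => (Pmat (X ω) i j) ^ 2) P := by
      refine hP2.mono' ((hPm i j).pow_const 2).aestronglyMeasurable (.of_forall fun ω => ?_)
      rw [Real.norm_of_nonneg (sq_nonneg _)]
      calc (Pmat (X ω) i j) ^ 2 ≤ ∑ j, (Pmat (X ω) i j) ^ 2 :=
            Finset.single_le_sum (f := fun j => (Pmat (X ω) i j) ^ 2)
              (fun _ _ => sq_nonneg _) (Finset.mem_univ j)
        _ ≤ _ := Finset.single_le_sum (f := fun i => ∑ j, (Pmat (X ω) i j) ^ 2)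
              (fun _ _ => Finset.sum_nonneg fun _ _ => sq_nonneg _) (Finset.mem_univ i)
    exact ((memLp_two_iff_integrable_sq (hPm i j).aestronglyMeasurable).2 h2).integrable
      one_le_two
  let c : ℕ → ℝ := fun n => (n : ℝ) + 1
  have hc : ∀ n, c n ≠ 0 := fun n => by positivity
  have hz : ∀ n, ∫ ω, (∑ i, ∑ j, G j ((c n)⁻¹ • X ω) (EuclideanSpace.single i 1)
      * Pmat (X ω) i j) ∂P = 0 := by
    intro n
    have h := hweak (fun x => c n • Ψ ((c n)⁻¹ • x))
      ((hΨ.comp (contDiff_const_smul (c n)⁻¹)).const_smul (c n))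
      (HasCompactSupport.smul_left (f := fun _ => c n)
        (hΨs.comp_homeomorph (Homeomorph.smulOfNeZero (c n)⁻¹ (inv_ne_zero (hc n)))))
    rw [← h]
    congr 1
    ext ω
    refine Finset.sum_congr rfl fun i _ => Finset.sum_congr rfl fun j _ => ?_
    congr 1
    have hd1 : HasFDerivAt (fun y => Ψ y j) (G j ((c n)⁻¹ • X ω)) ((c n)⁻¹ • X ω) :=
      ((hΨj j).differentiable (by simp) _).hasFDerivAt
    have hd2 : HasFDerivAt (fun y : EuclideanSpace ℝ (Fin d) => (c n)⁻¹ • y)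
        ((c n)⁻¹ • ContinuousLinearMap.id ℝ (EuclideanSpace ℝ (Fin d))) (X ω) :=
      (hasFDerivAt_id (X ω)).const_smul (c n)⁻¹
    have hd3 := (hd1.comp (X ω) hd2).const_smul (c n)
    have hd4 : HasFDerivAt (fun y => (c n • Ψ ((c n)⁻¹ • y)) j) _ (X ω) := hd3
    rw [hd4.fderiv]
    simp [hc n]
  have hlim : Filter.Tendsto (fun n => ∫ ω, (∑ i, ∑ j,
      G j ((c n)⁻¹ • X ω) (EuclideanSpace.single i 1) * Pmat (X ω) i j) ∂P) Filter.atTop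
      (nhds (∫ ω, (∑ i, Pmat (X ω) i i) ∂P)) := by
    refine tendsto_integral_of_dominated_convergence
      (fun ω => ∑ i, ∑ j, C j * ‖Pmat (X ω) i j‖) ?_ ?_ ?_ ?_
    · intro n
      refine Measurable.aestronglyMeasurable ?_
      refine Finset.measurable_sum _ fun i _ => Finset.measurable_sum _ fun j _ => ?_
      refine Measurable.mul ?_ (hPm i j)
      have : Continuous fun x => G j ((c n)⁻¹ • x) (EuclideanSpace.single i 1) :=
        ((hG j).comp (continuous_const_smul _)).clm_apply continuous_const
      exact this.measurable.comp hXmeas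
    · exact integrable_finsetSum _ fun i _ => integrable_finsetSum _ fun j _ =>
        (hPi i j).norm.const_mul _
    · intro n
      refine .of_forall fun ω => ?_
      refine (norm_sum_le _ _).trans (Finset.sum_le_sum fun i _ => ?_)
      refine (norm_sum_le _ _).trans (Finset.sum_le_sum fun j _ => ?_)
      rw [norm_mul]
      gcongr
      refine ((G j _).le_opNorm _).trans ?_
      simpa using hC j _
    · refine .of_forall fun ω => ?_
      have hs : ∑ i, Pmat (X ω) i i = ∑ i, ∑ j,
          G j 0 (EuclideanSpace.single i 1) * Pmat (X ω) i j := by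
        simp [hG0]
      rw [hs]
      refine tendsto_finsetSum _ fun i _ => tendsto_finsetSum _ fun j _ => ?_
      refine Filter.Tendsto.mul_const _ ?_
      have hcont : Continuous fun x => G j x (EuclideanSpace.single i 1) :=
        (hG j).clm_apply continuous_const
      have h0 : Filter.Tendsto (fun n => (c n)⁻¹ • X ω) Filter.atTop (nhds 0) := by
        have h1 : Filter.Tendsto (fun n => (c n)⁻¹) Filter.atTop (nhds 0) := by
          simpa [c] using tendsto_one_div_add_atTop_nhds_zero_nat (𝕜 := ℝ)
        simpa using h1.smul_const (X ω)
      exact (hcont.tendsto 0).comp h0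
  simp only [hz] at hlim
  exact (tendsto_nhds_unique hlim tendsto_const_nhds)
end

section
/- Let (Ω, F, P) be a probability space, d ≥ 1, and let X : [0,1] × Ω → ℝ^d (written X_t) be a stochastic process all of whose sample paths are twice continuously differentiable, with pathwise derivatives Ẋ_t and Ẍ_t. Fix t ∈ [0,1] and assume E‖X_t‖² < ∞, E‖Ẍ_t‖² < ∞, and E‖Π_t(X_t)‖_F² < ∞, where Π_t : ℝ^d → ℝ^{d×d} is a Borel measurable matrix field such that Π_t(X_t) is a version of E[Ẋ_t ⊗ Ẋ_t | σ(X_t)] − E[Ẋ_t | σ(X_t)] ⊗ E[Ẋ_t | σ(X_t)]. Suppose the weak balance law holds at time t: for every smooth compactly supported vector field Φ : ℝ^d → ℝ^d, −E[(DΦ)(X_t) : Π_t(X_t)] = E[Φ(X_t) · Ẍ_t]. Then −E[Tr Π_t(X_t)] = E[X_t · Ẍ_t]. -/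
open Set MeasureTheory

/-- For a process with C² sample paths and square-integrable `X_t`, `Ẍ_t`,
Reynolds tensor `Π_t`, the weak balance law
`−E[(DΦ)(X_t) : Π_t(X_t)] = E[Φ(X_t)·Ẍ_t]` (for all smooth compactly supported `Φ`)
implies `−E[Tr Π_t(X_t)] = E[X_t·Ẍ_t]`. -/
theorem trace_identity_of_weak_balance
    {Ω : Type*} [MeasurableSpace Ω] (P : Measure Ω) [IsProbabilityMeasure P]
    (d : ℕ) (hd : 1 ≤ d)
    (X X' X'' : ℝ → Ω → EuclideanSpace ℝ (Fin d))
    (hXmeas : ∀ s, Measurable (X s))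
    (hX'meas : ∀ s, Measurable (X' s))
    (hX''meas : ∀ s, Measurable (X'' s))
    (hderiv : ∀ ω, ∀ s ∈ Icc (0:ℝ) 1,
        HasDerivWithinAt (fun u => X u ω) (X' s ω) (Icc (0:ℝ) 1) s)
    (hderiv' : ∀ ω, ∀ s ∈ Icc (0:ℝ) 1,
        HasDerivWithinAt (fun u => X' u ω) (X'' s ω) (Icc (0:ℝ) 1) s)
    (hcont : ∀ ω, ContinuousOn (fun s => X'' s ω) (Icc (0:ℝ) 1))
    (t : ℝ) (ht : t ∈ Icc (0:ℝ) 1)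
    (hX2 : Integrable (fun ω => ‖X t ω‖ ^ 2) P)
    (hX''2 : Integrable (fun ω => ‖X'' t ω‖ ^ 2) P)
    (Pmat : EuclideanSpace ℝ (Fin d) → Matrix (Fin d) (Fin d) ℝ)
    (hPmeas : ∀ i j : Fin d, Measurable fun x => Pmat x i j)
    (hP2 : Integrable (fun ω => ∑ i, ∑ j, (Pmat (X t ω) i j) ^ 2) P)
    (hReynolds : ∀ i j : Fin d,
        (fun ω => Pmat (X t ω) i j)
          =ᵐ[P] fun ω =>
            (P[(fun ω' => X' t ω' i * X' t ω' j) |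
                MeasurableSpace.comap (X t) inferInstance]) ω
            - (P[(fun ω' => X' t ω' i) | MeasurableSpace.comap (X t) inferInstance]) ω
              * (P[(fun ω' => X' t ω' j) | MeasurableSpace.comap (X t) inferInstance]) ω)
    (hweak : ∀ Φ : EuclideanSpace ℝ (Fin d) → EuclideanSpace ℝ (Fin d),
        ContDiff ℝ (⊤ : ℕ∞) Φ → HasCompactSupport Φ →
        -∫ ω, (∑ i, ∑ j,
            fderiv ℝ (fun y => Φ y j) (X t ω) (EuclideanSpace.single i 1)
              * Pmat (X t ω) i j) ∂P
          = ∫ ω, (∑ i, Φ (X t ω) i * X'' t ω i) ∂P) :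
    -∫ ω, (∑ i, Pmat (X t ω) i i) ∂P = ∫ ω, (∑ i, X t ω i * X'' t ω i) ∂P := by
  classical
  -- the cutoff field `Ψ y = φ(y) y`
  let φ : ContDiffBump (0 : EuclideanSpace ℝ (Fin d)) := ⟨1, 2, by norm_num, by norm_num⟩
  let Ψ : EuclideanSpace ℝ (Fin d) → EuclideanSpace ℝ (Fin d) := fun y => φ y • y
  have hΨs : ContDiff ℝ (⊤ : ℕ∞) Ψ := φ.contDiff.smul contDiff_id
  have hΨc : HasCompactSupport Ψ := φ.hasCompactSupport.smul_right
  have hΨ1 : ∀ y ∈ Metric.ball (0 : EuclideanSpace ℝ (Fin d)) 1, Ψ y = y := by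
    intro y hy
    have : φ y = 1 := φ.one_of_mem_closedBall (Metric.ball_subset_closedBall hy)
    simp [Ψ, this]
  have hΨn : ∀ y, ‖Ψ y‖ ≤ ‖y‖ := by
    intro y
    have h1 : φ y ≤ 1 := φ.le_one
    have h0 : 0 ≤ φ y := φ.nonneg
    simp only [Ψ, norm_smul, Real.norm_eq_abs, abs_of_nonneg h0]
    exact mul_le_of_le_one_left (norm_nonneg _) h1
  have hΨj : ∀ j, ContDiff ℝ (⊤ : ℕ∞) (fun y => Ψ y j) := fun j =>
    (contDiff_euclidean.1 hΨs) j
  have hΨjc : ∀ j, HasCompactSupport (fun y => Ψ y j) := fun j =>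
    hΨc.comp_left (g := fun v : EuclideanSpace ℝ (Fin d) => v j) (by simp)
  let g : Fin d → Fin d → EuclideanSpace ℝ (Fin d) → ℝ := fun i j y =>
    fderiv ℝ (fun y => Ψ y j) y (EuclideanSpace.single i 1)
  have hgc : ∀ i j, Continuous (g i j) := fun i j =>
    ((hΨj j).continuous_fderiv (by simp)).clm_apply continuous_const
  have hgb : ∀ i j, ∃ C, ∀ y, ‖g i j y‖ ≤ C := fun i j =>
    ((hΨjc j).fderiv_apply (𝕜 := ℝ) (EuclideanSpace.single i 1)).exists_bound_of_continuous (hgc i j)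
  choose C hC using hgb
  have hg0 : ∀ i j, g i j 0 = if i = j then 1 else 0 := by
    intro i j
    have h1 : (fun y => Ψ y j) =ᶠ[nhds 0] fun y => EuclideanSpace.proj (𝕜 := ℝ) j y := by
      filter_upwards [Metric.ball_mem_nhds (0 : EuclideanSpace ℝ (Fin d)) one_pos] with y hy
      simp [hΨ1 y hy]
    simp only [g]
    rw [h1.fderiv_eq, ContinuousLinearMap.fderiv]
    simp [eq_comm]
  -- the rescaled fields
  let c : ℕ → ℝ := fun n => (n : ℝ) + 1
  have hc : ∀ n, 0 < c n := fun n => by positivity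
  let Φ : ℕ → EuclideanSpace ℝ (Fin d) → EuclideanSpace ℝ (Fin d) :=
    fun n y => c n • Ψ ((c n)⁻¹ • y)
  have hΦs : ∀ n, ContDiff ℝ (⊤ : ℕ∞) (Φ n) := fun n =>
    (hΨs.comp (contDiff_id.const_smul (c n)⁻¹)).const_smul (c n)
  have hΦc : ∀ n, HasCompactSupport (Φ n) := by
    intro n
    have h := hΨc.comp_homeomorph (Homeomorph.smulOfNeZero (c n)⁻¹ (inv_ne_zero (hc n).ne'))
    exact h.comp_left (g := fun v => c n • v) (by simp)
  have hΦd : ∀ n i j x, fderiv ℝ (fun y => Φ n y j) x (EuclideanSpace.single i 1)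
      = g i j ((c n)⁻¹ • x) := by
    intro n i j x
    have h1 : HasFDerivAt (fun y => Ψ y j) (fderiv ℝ (fun y => Ψ y j) ((c n)⁻¹ • x))
        ((c n)⁻¹ • x) := ((hΨj j).differentiable (by simp) _).hasFDerivAt
    have h2 : HasFDerivAt (fun y : EuclideanSpace ℝ (Fin d) => (c n)⁻¹ • y)
        ((c n)⁻¹ • ContinuousLinearMap.id ℝ _) x := (hasFDerivAt_id x).const_smul (c n)⁻¹
    have h3 := (h1.comp x h2).const_smul (c n)
    have h4 : HasFDerivAt (fun y => Φ n y j) _ x := h3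
    rw [h4.fderiv]
    simp [g, (hc n).ne']
  have hlim0 : ∀ x : EuclideanSpace ℝ (Fin d),
      Filter.Tendsto (fun n => (c n)⁻¹ • x) Filter.atTop (nhds 0) := by
    intro x
    have h := (tendsto_one_div_add_atTop_nhds_zero_nat (𝕜 := ℝ)).smul_const x
    simpa [c] using h
  have hΦn : ∀ n x, ‖Φ n x‖ ≤ ‖x‖ := by
    intro n x
    calc ‖Φ n x‖ = c n * ‖Ψ ((c n)⁻¹ • x)‖ := by
          simp [Φ, norm_smul, abs_of_pos (hc n)]
      _ ≤ c n * ‖(c n)⁻¹ • x‖ := mul_le_mul_of_nonneg_left (hΨn _) (hc n).le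
      _ = ‖x‖ := by
          rw [norm_smul, Real.norm_eq_abs, abs_of_pos (inv_pos.2 (hc n)), ← mul_assoc,
            mul_inv_cancel₀ (hc n).ne', one_mul]
  have hΦlim : ∀ x, Filter.Tendsto (fun n => Φ n x) Filter.atTop (nhds x) := by
    intro x
    apply tendsto_const_nhds.congr'
    filter_upwards [(hlim0 x).eventually (Metric.ball_mem_nhds _ one_pos)] with n hn
    have := hΨ1 _ hn
    simp only [Φ, this, smul_smul, mul_inv_cancel₀ (hc n).ne', one_smul]
  -- measurability and integrability
  have hPm : ∀ i j, Measurable fun ω => Pmat (X t ω) i j := fun i j =>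
    (hPmeas i j).comp (hXmeas t)
  have hPi : ∀ i j, Integrable (fun ω => Pmat (X t ω) i j) P := by
    intro i j
    have h2 : Integrable (fun ω => (Pmat (X t ω) i j) ^ 2) P := by
      refine hP2.mono' ((hPm i j).pow_const 2).aestronglyMeasurable (.of_forall fun ω => ?_)
      rw [Real.norm_eq_abs, abs_of_nonneg (sq_nonneg _)]
      exact (Finset.single_le_sum (f := fun j => (Pmat (X t ω) i j) ^ 2)
        (fun j _ => sq_nonneg _) (Finset.mem_univ j)).trans
        (Finset.single_le_sum (f := fun i => ∑ j, (Pmat (X t ω) i j) ^ 2)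
        (fun i _ => Finset.sum_nonneg fun j _ => sq_nonneg _) (Finset.mem_univ i))
    exact ((memLp_two_iff_integrable_sq (hPm i j).aestronglyMeasurable).2 h2).integrable
      (by norm_num)
  have hcm : ∀ (i : Fin d), Measurable fun v : EuclideanSpace ℝ (Fin d) => v i := fun i =>
    (EuclideanSpace.proj (𝕜 := ℝ) i).continuous.measurable
  have hL : Filter.Tendsto (fun n => ∫ ω, (∑ i, ∑ j,
            fderiv ℝ (fun y => Φ n y j) (X t ω) (EuclideanSpace.single i 1)
              * Pmat (X t ω) i j) ∂P) Filter.atTop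
      (nhds (∫ ω, (∑ i, Pmat (X t ω) i i) ∂P)) := by
    simp only [hΦd]
    refine tendsto_integral_of_dominated_convergence
      (fun ω => ∑ i, ∑ j, C i j * ‖Pmat (X t ω) i j‖) ?_ ?_ ?_ ?_
    · intro n
      refine Measurable.aestronglyMeasurable ?_
      refine Finset.measurable_sum _ fun i _ => Finset.measurable_sum _ fun j _ => ?_
      exact ((hgc i j).measurable.comp ((hXmeas t).const_smul (c n)⁻¹)).mul (hPm i j)
    · exact integrable_finsetSum _ fun i _ => integrable_finsetSum _ fun j _ =>
        (hPi i j).norm.const_mul _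
    · intro n
      refine .of_forall fun ω => ?_
      refine (norm_sum_le _ _).trans (Finset.sum_le_sum fun i _ => ?_)
      refine (norm_sum_le _ _).trans (Finset.sum_le_sum fun j _ => ?_)
      rw [norm_mul]
      exact mul_le_mul_of_nonneg_right (hC i j _) (norm_nonneg _)
    · refine .of_forall fun ω => ?_
      have h : Filter.Tendsto (fun n => ∑ i, ∑ j, g i j ((c n)⁻¹ • X t ω) * Pmat (X t ω) i j)
          Filter.atTop (nhds (∑ i, ∑ j, g i j 0 * Pmat (X t ω) i j)) :=
        tendsto_finsetSum _ fun i _ => tendsto_finsetSum _ fun j _ =>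
          (((hgc i j).tendsto 0).comp (hlim0 _)).mul_const _
      simpa [hg0] using h
  have hR : Filter.Tendsto (fun n => ∫ ω, (∑ i, Φ n (X t ω) i * X'' t ω i) ∂P) Filter.atTop
      (nhds (∫ ω, (∑ i, X t ω i * X'' t ω i) ∂P)) := by
    refine tendsto_integral_of_dominated_convergence
      (fun ω => ∑ i : Fin d, (‖X t ω‖ ^ 2 + ‖X'' t ω‖ ^ 2)) ?_ ?_ ?_ ?_
    · intro n
      refine Measurable.aestronglyMeasurable ?_
      refine Finset.measurable_sum _ fun i _ => ?_
      exact ((hcm i).comp ((hΦs n).continuous.measurable.comp (hXmeas t))).mul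
        ((hcm i).comp (hX''meas t))
    · exact integrable_finsetSum _ fun i _ => hX2.add hX''2
    · intro n
      refine .of_forall fun ω => ?_
      refine (norm_sum_le _ _).trans (Finset.sum_le_sum fun i _ => ?_)
      rw [norm_mul]
      have h1 := (PiLp.norm_apply_le (Φ n (X t ω)) i).trans (hΦn n _)
      have h2 := PiLp.norm_apply_le (X'' t ω) i
      have h3 := mul_le_mul h1 h2 (norm_nonneg _) (norm_nonneg _)
      nlinarith [sq_nonneg (‖X t ω‖ - ‖X'' t ω‖), sq_nonneg (‖X t ω‖), sq_nonneg (‖X'' t ω‖)]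
    · refine .of_forall fun ω => ?_
      refine tendsto_finsetSum _ fun i _ => ?_
      exact (((EuclideanSpace.proj (𝕜 := ℝ) i).continuous.tendsto _).comp
        (hΦlim (X t ω))).mul_const _
  exact tendsto_nhds_unique hL.neg (hR.congr fun n => (hweak (Φ n) (hΦs n) (hΦc n)).symm)
end

section
/- Let (Ω, F, P) be a probability space, d ≥ 1, and let X : [0,1] × Ω → ℝ^d (written X_t) be a stochastic process all of whose sample paths are twice continuously differentiable, with pathwise derivatives Ẋ_t and Ẍ_t. Fix t ∈ [0,1] and assume E‖X_t‖² < ∞, E‖Ẋ_t‖² < ∞, E‖Ẍ_t‖² < ∞, and E‖Π_t(X_t)‖_F² < ∞, where Π_t : ℝ^d → ℝ^{d×d} is a Borel measurable matrix field such that Π_t(X_t) is a version of E[Ẋ_t ⊗ Ẋ_t | σ(X_t)] − E[Ẋ_t | σ(X_t)] ⊗ E[Ẋ_t | σ(X_t)]. Suppose that for every smooth compactly supported vector field Φ : ℝ^d → ℝ^d, −E[(DΦ)(X_t) : Π_t(X_t)] = E[Φ(X_t) · Ẍ_t]. Then E[X_t · Ẍ_t] ≤ 0. -/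
open Set MeasureTheory

lemma aux_cutoff (d : ℕ) : ∃ Ψ : EuclideanSpace ℝ (Fin d) → EuclideanSpace ℝ (Fin d),
    ContDiff ℝ (⊤ : ℕ∞) Ψ ∧ HasCompactSupport Ψ ∧ (∀ x, ‖Ψ x‖ ≤ ‖x‖) ∧
    (∀ᶠ x in nhds (0 : EuclideanSpace ℝ (Fin d)), Ψ x = x) := by
  let f : ContDiffBump (0 : EuclideanSpace ℝ (Fin d)) := ⟨1, 2, by norm_num, by norm_num⟩
  refine ⟨fun x => f x • x, f.contDiff.smul contDiff_id, f.hasCompactSupport.smul_right, ?_, ?_⟩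
  · intro x
    rw [norm_smul, Real.norm_of_nonneg f.nonneg]
    exact mul_le_of_le_one_left (norm_nonneg _) f.le_one
  · filter_upwards [f.eventuallyEq_one] with x hx
    simp [hx]

lemma aux_var {Ω : Type*} [m0 : MeasurableSpace Ω] (P : Measure Ω) [IsProbabilityMeasure P]
    (m : MeasurableSpace Ω) (hm : m ≤ m0) (Y : Ω → ℝ) (hY : MemLp Y 2 P) :
    ∀ᵐ ω ∂P, 0 ≤ (P[(fun ω' => Y ω' * Y ω') | m]) ω - (P[Y | m]) ω * (P[Y | m]) ω := by
  have h := ProbabilityTheory.condVar_ae_eq_condExp_sq_sub_sq_condExp hm hY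
  have h0 : 0 ≤ᵐ[P] ProbabilityTheory.condVar m Y P :=
    condExp_nonneg (Filter.Eventually.of_forall fun ω => by simp only [Pi.zero_apply, Pi.pow_apply]; positivity)
  have e : (fun ω' => Y ω' * Y ω') = Y ^ 2 := by ext; simp [sq]
  filter_upwards [h, h0] with ω h h0
  rw [h] at h0
  simp only [Pi.zero_apply, Pi.sub_apply, Pi.pow_apply] at h0
  rw [e, ← sq]
  exact h0


/-- For a process with C² sample paths and square-integrable
`X_t, Ẋ_t, Ẍ_t, Π_t(X_t)`, the weak balance law
`−E[(DΦ)(X_t) : Π_t(X_t)] = E[Φ(X_t)·Ẍ_t]` (for all smooth compactly supported `Φ`)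
implies `E[X_t · Ẍ_t] ≤ 0`. -/
theorem radial_acceleration_nonpos_of_weak_balance
    {Ω : Type*} [MeasurableSpace Ω] (P : Measure Ω) [IsProbabilityMeasure P]
    (d : ℕ) (hd : 1 ≤ d)
    (X X' X'' : ℝ → Ω → EuclideanSpace ℝ (Fin d))
    (hXmeas : ∀ s, Measurable (X s))
    (hX'meas : ∀ s, Measurable (X' s))
    (hX''meas : ∀ s, Measurable (X'' s))
    (hderiv : ∀ ω, ∀ s ∈ Icc (0:ℝ) 1,
        HasDerivWithinAt (fun u => X u ω) (X' s ω) (Icc (0:ℝ) 1) s)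
    (hderiv' : ∀ ω, ∀ s ∈ Icc (0:ℝ) 1,
        HasDerivWithinAt (fun u => X' u ω) (X'' s ω) (Icc (0:ℝ) 1) s)
    (hcont : ∀ ω, ContinuousOn (fun s => X'' s ω) (Icc (0:ℝ) 1))
    (t : ℝ) (ht : t ∈ Icc (0:ℝ) 1)
    (hX2 : Integrable (fun ω => ‖X t ω‖ ^ 2) P)
    (hX'2 : Integrable (fun ω => ‖X' t ω‖ ^ 2) P)
    (hX''2 : Integrable (fun ω => ‖X'' t ω‖ ^ 2) P)
    (Pmat : EuclideanSpace ℝ (Fin d) → Matrix (Fin d) (Fin d) ℝ)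
    (hPmeas : ∀ i j : Fin d, Measurable fun x => Pmat x i j)
    (hP2 : Integrable (fun ω => ∑ i, ∑ j, (Pmat (X t ω) i j) ^ 2) P)
    (hReynolds : ∀ i j : Fin d,
        (fun ω => Pmat (X t ω) i j)
          =ᵐ[P] fun ω =>
            (P[(fun ω' => X' t ω' i * X' t ω' j) |
                MeasurableSpace.comap (X t) inferInstance]) ω
            - (P[(fun ω' => X' t ω' i) | MeasurableSpace.comap (X t) inferInstance]) ω
              * (P[(fun ω' => X' t ω' j) | MeasurableSpace.comap (X t) inferInstance]) ω)
    (hweak : ∀ Φ : EuclideanSpace ℝ (Fin d) → EuclideanSpace ℝ (Fin d),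
        ContDiff ℝ (⊤ : ℕ∞) Φ → HasCompactSupport Φ →
        -∫ ω, (∑ i, ∑ j,
            fderiv ℝ (fun y => Φ y j) (X t ω) (EuclideanSpace.single i 1)
              * Pmat (X t ω) i j) ∂P
          = ∫ ω, (∑ i, Φ (X t ω) i * X'' t ω i) ∂P) :
    ∫ ω, (∑ i, X t ω i * X'' t ω i) ∂P ≤ 0 := by
  obtain ⟨Ψ, hΨs, hΨc, hΨn, hΨ0⟩ := aux_cutoff d
  have hΨj : ∀ j, ContDiff ℝ (⊤ : ℕ∞) (fun y => Ψ y j) := fun j => by fun_prop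
  have hΨjc : ∀ j, HasCompactSupport (fun y => Ψ y j) := fun j =>
    hΨc.comp_left (g := fun v : EuclideanSpace ℝ (Fin d) => v j) rfl
  have hDc : ∀ j, Continuous (fderiv ℝ (fun y => Ψ y j)) := fun j =>
    (hΨj j).continuous_fderiv (by simp)
  have hDb : ∀ j, ∃ C, ∀ x, ‖fderiv ℝ (fun y => Ψ y j) x‖ ≤ C := fun j =>
    ((hΨjc j).fderiv ℝ).exists_bound_of_continuous (hDc j)
  choose C hC using hDb
  have hD0 : ∀ i j, fderiv ℝ (fun y => Ψ y j) 0 (EuclideanSpace.single i 1)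
      = if i = j then 1 else 0 := by
    intro i j
    have e : (fun y => Ψ y j) =ᶠ[nhds 0] (EuclideanSpace.proj j : EuclideanSpace ℝ (Fin d) →L[ℝ] ℝ) := by
      filter_upwards [hΨ0] with y hy
      simp [hy]
    rw [e.fderiv_eq, ContinuousLinearMap.fderiv]
    simp [Pi.single_apply, eq_comm]
  let c : ℕ → ℝ := fun n => (n : ℝ) + 1
  have hcpos : ∀ n, 0 < c n := fun n => by positivity
  have hctop : Filter.Tendsto (fun n => (c n)⁻¹) Filter.atTop (nhds 0) := by
    simpa [c] using tendsto_one_div_add_atTop_nhds_zero_nat (𝕜 := ℝ)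
  have hsc : ∀ x : EuclideanSpace ℝ (Fin d),
      Filter.Tendsto (fun n => (c n)⁻¹ • x) Filter.atTop (nhds 0) := fun x => by
    simpa using hctop.smul_const x
  let Φ : ℕ → EuclideanSpace ℝ (Fin d) → EuclideanSpace ℝ (Fin d) :=
    fun n x => c n • Ψ ((c n)⁻¹ • x)
  have hΦs : ∀ n, ContDiff ℝ (⊤ : ℕ∞) (Φ n) := fun n =>
    (hΨs.comp (contDiff_id.const_smul (c n)⁻¹)).const_smul (c n)
  have hΦc : ∀ n, HasCompactSupport (Φ n) := fun n =>
    (hΨc.comp_smul (inv_ne_zero (hcpos n).ne')).smul_left (f := fun _ => c n)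
  have hΦn : ∀ n x, ‖Φ n x‖ ≤ ‖x‖ := fun n x => by
    have h := hΨn ((c n)⁻¹ • x)
    rw [norm_smul, norm_inv, Real.norm_of_nonneg (hcpos n).le] at h
    simp only [Φ]
    rw [norm_smul, Real.norm_of_nonneg (hcpos n).le]
    calc c n * ‖Ψ ((c n)⁻¹ • x)‖ ≤ c n * ((c n)⁻¹ * ‖x‖) := by
          gcongr
      _ = ‖x‖ := mul_inv_cancel_left₀ (hcpos n).ne' _
  have hΦl : ∀ x, ∀ᶠ n in Filter.atTop, Φ n x = x := fun x => by
    filter_upwards [(hsc x).eventually hΨ0] with n hn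
    simp only [Φ]
    rw [hn, smul_inv_smul₀ (hcpos n).ne']
  have hΦD : ∀ n j x, fderiv ℝ (fun y => Φ n y j) x
      = fderiv ℝ (fun y => Ψ y j) ((c n)⁻¹ • x) := fun n j x => by
    have hd1 : HasFDerivAt (fun y => Ψ y j) (fderiv ℝ (fun y => Ψ y j) ((c n)⁻¹ • x)) ((c n)⁻¹ • x) :=
      ((hΨj j).differentiable (by simp) _).hasFDerivAt
    have hd2 : HasFDerivAt (fun y : EuclideanSpace ℝ (Fin d) => (c n)⁻¹ • y)
        ((c n)⁻¹ • ContinuousLinearMap.id ℝ _) x := 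
      ((c n)⁻¹ • ContinuousLinearMap.id ℝ (EuclideanSpace ℝ (Fin d))).hasFDerivAt
    have hd3 := (hd1.comp x hd2).const_smul (c n)
    have : (fun y => Φ n y j) = c n • ((fun y => Ψ y j) ∘ fun y => (c n)⁻¹ • y) := by
      ext y; simp [Φ]
    rw [this, hd3.fderiv]
    ext v
    simp [mul_inv_cancel_left₀ (hcpos n).ne']
  have hXm := hXmeas t
  have hX'm := hX'meas t
  have hX''m := hX''meas t
  have hPint : ∀ i j, Integrable (fun ω => Pmat (X t ω) i j) P := fun i j => by
    have hm : Measurable (fun ω => Pmat (X t ω) i j) := (hPmeas i j).comp hXm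
    refine MemLp.integrable (q := 2) (by norm_num) ?_
    rw [memLp_two_iff_integrable_sq hm.aestronglyMeasurable]
    refine hP2.mono' (hm.pow_const 2).aestronglyMeasurable (Filter.Eventually.of_forall fun ω => ?_)
    rw [Real.norm_of_nonneg (sq_nonneg _)]
    calc Pmat (X t ω) i j ^ 2 ≤ ∑ j, Pmat (X t ω) i j ^ 2 :=
          Finset.single_le_sum (f := fun j => Pmat (X t ω) i j ^ 2)
            (fun _ _ => sq_nonneg _) (Finset.mem_univ j)
      _ ≤ _ := Finset.single_le_sum (f := fun i => ∑ j, Pmat (X t ω) i j ^ 2)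
            (fun _ _ => Finset.sum_nonneg fun _ _ => sq_nonneg _) (Finset.mem_univ i)
  have hXX : Integrable (fun ω => ‖X t ω‖ * ‖X'' t ω‖) P := by
    refine (hX2.add hX''2).mono' (hXm.norm.mul hX''m.norm).aestronglyMeasurable
      (Filter.Eventually.of_forall fun ω => ?_)
    rw [Real.norm_of_nonneg (by positivity)]
    simp only [Pi.add_apply]
    nlinarith [sq_nonneg (‖X t ω‖ - ‖X'' t ω‖), sq_nonneg (‖X t ω‖), sq_nonneg (‖X'' t ω‖)]
  have hL : Filter.Tendsto (fun n => ∫ ω, (∑ i, ∑ j,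
            fderiv ℝ (fun y => Φ n y j) (X t ω) (EuclideanSpace.single i 1)
              * Pmat (X t ω) i j) ∂P) Filter.atTop
      (nhds (∫ ω, (∑ i, ∑ j, (if i = j then 1 else 0) * Pmat (X t ω) i j) ∂P)) := by
    refine tendsto_integral_of_dominated_convergence
      (fun ω => ∑ i, ∑ j, C j * ‖Pmat (X t ω) i j‖) ?_ ?_ ?_ ?_
    · intro n
      refine Measurable.aestronglyMeasurable ?_
      refine Finset.measurable_sum _ fun i _ => Finset.measurable_sum _ fun j _ => ?_
      refine Measurable.mul ?_ ((hPmeas i j).comp hXm)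
      simp only [hΦD]
      have : Continuous fun x : EuclideanSpace ℝ (Fin d) =>
          fderiv ℝ (fun y => Ψ y j) ((c n)⁻¹ • x) (EuclideanSpace.single i 1) :=
        ((hDc j).comp (continuous_const_smul _)).clm_apply continuous_const
      exact this.measurable.comp hXm
    · exact integrable_finsetSum _ fun i _ => integrable_finsetSum _ fun j _ =>
        (hPint i j).norm.const_mul _
    · intro n
      refine Filter.Eventually.of_forall fun ω => ?_
      refine (norm_sum_le _ _).trans (Finset.sum_le_sum fun i _ => ?_)
      refine (norm_sum_le _ _).trans (Finset.sum_le_sum fun j _ => ?_)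
      rw [norm_mul, hΦD]
      gcongr
      refine (ContinuousLinearMap.le_opNorm _ _).trans ?_
      simpa using hC j ((c n)⁻¹ • X t ω)
    · refine Filter.Eventually.of_forall fun ω => ?_
      refine tendsto_finsetSum _ fun i _ => tendsto_finsetSum _ fun j _ => ?_
      refine Filter.Tendsto.mul_const _ ?_
      simp only [hΦD]
      rw [← hD0 i j]
      have : Continuous fun x : EuclideanSpace ℝ (Fin d) =>
          fderiv ℝ (fun y => Ψ y j) x (EuclideanSpace.single i 1) :=
        (hDc j).clm_apply continuous_const
      exact (this.tendsto 0).comp (hsc _)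
  have hR : Filter.Tendsto (fun n => ∫ ω, (∑ i, Φ n (X t ω) i * X'' t ω i) ∂P) Filter.atTop
      (nhds (∫ ω, (∑ i, X t ω i * X'' t ω i) ∂P)) := by
    refine tendsto_integral_of_dominated_convergence
      (fun ω => ∑ _i : Fin d, ‖X t ω‖ * ‖X'' t ω‖) ?_ ?_ ?_ ?_
    · intro n
      refine Measurable.aestronglyMeasurable ?_
      refine Finset.measurable_sum _ fun i _ => ?_
      have h1 : Continuous fun x => Φ n x i := by
        have := (hΦs n).continuous
        fun_prop
      have h2 : Continuous fun x : EuclideanSpace ℝ (Fin d) => x i := by fun_prop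
      exact (h1.measurable.comp hXm).mul (h2.measurable.comp hX''m)
    · exact integrable_finsetSum _ fun i _ => hXX
    · intro n
      refine Filter.Eventually.of_forall fun ω => ?_
      refine (norm_sum_le _ _).trans (Finset.sum_le_sum fun i _ => ?_)
      rw [norm_mul]
      gcongr
      · exact (PiLp.norm_apply_le _ i).trans (hΦn n _)
      · exact PiLp.norm_apply_le _ i
    · refine Filter.Eventually.of_forall fun ω => ?_
      refine tendsto_const_nhds.congr' ?_
      filter_upwards [hΦl (X t ω)] with n hn
      rw [hn]
  have hEq := tendsto_nhds_unique (hL.neg.congr fun n => hweak (Φ n) (hΦs n) (hΦc n)) hR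
  rw [← hEq, neg_nonpos]
  refine integral_nonneg_of_ae ?_
  have hpos : ∀ i, ∀ᵐ ω ∂P, 0 ≤ Pmat (X t ω) i i := fun i => by
    have h2 : Continuous fun x : EuclideanSpace ℝ (Fin d) => x i := by fun_prop
    have hm : Measurable (fun ω => X' t ω i) := h2.measurable.comp hX'm
    have hY : MemLp (fun ω => X' t ω i) 2 P := by
      rw [memLp_two_iff_integrable_sq hm.aestronglyMeasurable]
      refine hX'2.mono' (hm.pow_const 2).aestronglyMeasurable
        (Filter.Eventually.of_forall fun ω => ?_)
      rw [norm_pow]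
      gcongr
      exact PiLp.norm_apply_le _ i
    filter_upwards [hReynolds i i, aux_var P _ hXm.comap_le _ hY] with ω h1 h2
    rw [h1]
    exact h2
  filter_upwards [Filter.eventually_all.2 hpos] with ω hω
  simp only [Pi.zero_apply, ite_mul, one_mul, zero_mul, Finset.sum_ite_eq, Finset.mem_univ, if_true]
  exact Finset.sum_nonneg fun i _ => hω i
end

section
/- Let (Ω, F, P) be a probability space, d ≥ 1, and let X : [0,1] × Ω → ℝ^d (written X_t) be a stochastic process all of whose sample paths are twice continuously differentiable, with pathwise derivatives Ẋ_t and Ẍ_t. Fix t ∈ [0,1] and assume E‖X_t‖² < ∞, E‖Ẋ_t‖² < ∞, E‖Ẍ_t‖² < ∞, and E‖Π_t(X_t)‖_F² < ∞, where Π_t : ℝ^d → ℝ^{d×d} is a Borel measurable matrix field such that Π_t(X_t) is a version of E[Ẋ_t ⊗ Ẋ_t | σ(X_t)] − E[Ẋ_t | σ(X_t)] ⊗ E[Ẋ_t | σ(X_t)]. Suppose that for every smooth compactly supported vector field Φ : ℝ^d → ℝ^d, −E[(DΦ)(X_t) : Π_t(X_t)] = E[Φ(X_t) · Ẍ_t].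 Then, noting the pathwise identity ∂_tt ‖X_t‖² = 2 X_t · Ẍ_t + 2 ‖Ẋ_t‖², one has E[∂_tt ‖X_t‖²] ≤ 2 E[‖Ẋ_t‖²]. -/
open Set MeasureTheory

set_option maxHeartbeats 2000000 in
/-- For a process with C² sample paths and square-integrable
`X_t, Ẋ_t, Ẍ_t, Π_t(X_t)`, the weak balance law
`−E[(DΦ)(X_t) : Π_t(X_t)] = E[Φ(X_t)·Ẍ_t]` (for all smooth compactly supported `Φ`)
implies, via the pathwise identity `∂_tt ‖X_t‖² = 2 X_t·Ẍ_t + 2‖Ẋ_t‖²`, that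
`E[∂_tt ‖X_t‖²] ≤ 2 E[‖Ẋ_t‖²]`. -/
theorem second_deriv_norm_sq_bound_of_weak_balance
    {Ω : Type*} [MeasurableSpace Ω] (P : Measure Ω) [IsProbabilityMeasure P]
    (d : ℕ) (hd : 1 ≤ d)
    (X X' X'' : ℝ → Ω → EuclideanSpace ℝ (Fin d))
    (hXmeas : ∀ s, Measurable (X s))
    (hX'meas : ∀ s, Measurable (X' s))
    (hX''meas : ∀ s, Measurable (X'' s))
    (hderiv : ∀ ω, ∀ s ∈ Icc (0:ℝ) 1,
        HasDerivWithinAt (fun u => X u ω) (X' s ω) (Icc (0:ℝ) 1) s)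
    (hderiv' : ∀ ω, ∀ s ∈ Icc (0:ℝ) 1,
        HasDerivWithinAt (fun u => X' u ω) (X'' s ω) (Icc (0:ℝ) 1) s)
    (hcont : ∀ ω, ContinuousOn (fun s => X'' s ω) (Icc (0:ℝ) 1))
    (t : ℝ) (ht : t ∈ Icc (0:ℝ) 1)
    (hX2 : Integrable (fun ω => ‖X t ω‖ ^ 2) P)
    (hX'2 : Integrable (fun ω => ‖X' t ω‖ ^ 2) P)
    (hX''2 : Integrable (fun ω => ‖X'' t ω‖ ^ 2) P)
    (Pmat : EuclideanSpace ℝ (Fin d) → Matrix (Fin d) (Fin d) ℝ)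
    (hPmeas : ∀ i j : Fin d, Measurable fun x => Pmat x i j)
    (hP2 : Integrable (fun ω => ∑ i, ∑ j, (Pmat (X t ω) i j) ^ 2) P)
    (hReynolds : ∀ i j : Fin d,
        (fun ω => Pmat (X t ω) i j)
          =ᵐ[P] fun ω =>
            (P[(fun ω' => X' t ω' i * X' t ω' j) |
                MeasurableSpace.comap (X t) inferInstance]) ω
            - (P[(fun ω' => X' t ω' i) | MeasurableSpace.comap (X t) inferInstance]) ω
              * (P[(fun ω' => X' t ω' j) | MeasurableSpace.comap (X t) inferInstance]) ω)
    (hweak : ∀ Φ : EuclideanSpace ℝ (Fin d) → EuclideanSpace ℝ (Fin d),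
        ContDiff ℝ (⊤ : ℕ∞) Φ → HasCompactSupport Φ →
        -∫ ω, (∑ i, ∑ j,
            fderiv ℝ (fun y => Φ y j) (X t ω) (EuclideanSpace.single i 1)
              * Pmat (X t ω) i j) ∂P
          = ∫ ω, (∑ i, Φ (X t ω) i * X'' t ω i) ∂P) :
    ∫ ω, derivWithin (fun s => derivWithin (fun u => ‖X u ω‖ ^ 2) (Icc (0:ℝ) 1) s)
        (Icc (0:ℝ) 1) t ∂P
      ≤ 2 * ∫ ω, ‖X' t ω‖ ^ 2 ∂P := by
  classical
  have hm : MeasurableSpace.comap (X t) inferInstance ≤ (inferInstance : MeasurableSpace Ω) :=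
    (hXmeas t).comap_le
  have hud : UniqueDiffOn ℝ (Icc (0:ℝ) 1) := uniqueDiffOn_Icc zero_lt_one
  -- pathwise identity
  have hpath : ∀ ω, derivWithin (fun s => derivWithin (fun u => ‖X u ω‖ ^ 2) (Icc (0:ℝ) 1) s)
        (Icc (0:ℝ) 1) t = 2 * inner ℝ (X t ω) (X'' t ω) + 2 * ‖X' t ω‖ ^ 2 := by
    intro ω
    have h1 : ∀ s ∈ Icc (0:ℝ) 1, derivWithin (fun u => ‖X u ω‖ ^ 2) (Icc (0:ℝ) 1) s
        = 2 * inner ℝ (X s ω) (X' s ω) := fun s hs =>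
      ((hderiv ω s hs).norm_sq).derivWithin (hud s hs)
    rw [derivWithin_congr h1 (h1 t ht)]
    have h2 := (((hderiv ω t ht).inner ℝ (hderiv' ω t ht)).const_mul 2).derivWithin (hud t ht)
    rw [h2, real_inner_self_eq_norm_sq]
    ring
  have hinner : ∀ x y : EuclideanSpace ℝ (Fin d), inner ℝ x y = ∑ i, x i * y i := by
    intro x y
    rw [PiLp.inner_apply]
    simp [mul_comm]
  have hXi : Integrable (fun ω => inner ℝ (X t ω) (X'' t ω)) P := by
    refine (hX2.add hX''2).mono'
      ((hXmeas t).inner (hX''meas t)).aestronglyMeasurable (ae_of_all _ fun ω => ?_)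
    have := norm_inner_le_norm (𝕜 := ℝ) (X t ω) (X'' t ω)
    simp only [Pi.add_apply]
    nlinarith [sq_nonneg (‖X t ω‖ - ‖X'' t ω‖), sq_nonneg (‖X t ω‖), sq_nonneg ‖X'' t ω‖]
  have hPi : ∀ i j, Integrable (fun ω => Pmat (X t ω) i j) P := by
    intro i j
    have hmeas : Measurable (fun ω => Pmat (X t ω) i j) := (hPmeas i j).comp (hXmeas t)
    refine MemLp.integrable (q := 2) (by norm_num)
      ((memLp_two_iff_integrable_sq hmeas.aestronglyMeasurable).2 ?_)
    refine hP2.mono' (hmeas.pow_const 2).aestronglyMeasurable (ae_of_all _ fun ω => ?_)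
    rw [Real.norm_of_nonneg (sq_nonneg _)]
    calc (Pmat (X t ω) i j) ^ 2 ≤ ∑ j, (Pmat (X t ω) i j) ^ 2 :=
          Finset.single_le_sum (f := fun j => (Pmat (X t ω) i j) ^ 2)
            (fun _ _ => sq_nonneg _) (Finset.mem_univ j)
      _ ≤ _ := Finset.single_le_sum (f := fun i => ∑ j, (Pmat (X t ω) i j) ^ 2)
            (fun _ _ => Finset.sum_nonneg fun _ _ => sq_nonneg _) (Finset.mem_univ i)
  -- the diagonal is nonnegative
  have hdiag : ∀ i, 0 ≤ ∫ ω, Pmat (X t ω) i i ∂P := by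
    intro i
    refine integral_nonneg_of_ae ?_
    have hmeas : Measurable (fun ω => X' t ω i) := by
      have := hX'meas t
      fun_prop
    have hL2 : MemLp (fun ω => X' t ω i) 2 P := by
      refine (memLp_two_iff_integrable_sq hmeas.aestronglyMeasurable).2 ?_
      refine hX'2.mono' (hmeas.pow_const 2).aestronglyMeasurable (ae_of_all _ fun ω => ?_)
      rw [Real.norm_of_nonneg (sq_nonneg _), EuclideanSpace.real_norm_sq_eq]
      exact Finset.single_le_sum (f := fun j => (X' t ω j) ^ 2)
            (fun _ _ => sq_nonneg _) (Finset.mem_univ i)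
    have h1 := ProbabilityTheory.condVar_ae_eq_condExp_sq_sub_sq_condExp hm hL2
    have h2 : 0 ≤ᵐ[P] ProbabilityTheory.condVar
        (MeasurableSpace.comap (X t) inferInstance) (fun ω => X' t ω i) P :=
      condExp_nonneg (ae_of_all _ fun ω => sq_nonneg _)
    have h3 : (fun ω' => X' t ω' i * X' t ω' i) = (fun ω => X' t ω i) ^ 2 := by
      ext ω; simp [sq]
    have h4 := hReynolds i i
    rw [h3] at h4
    filter_upwards [h1, h2, h4] with ω a b c
    rw [a] at b
    simp only [Pi.zero_apply, Pi.sub_apply, Pi.pow_apply] at b ⊢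
    rw [c]
    linarith [sq ((P[(fun ω => X' t ω i) | MeasurableSpace.comap (X t) inferInstance]) ω)]
  -- cutoff
  let f : ContDiffBump (0 : EuclideanSpace ℝ (Fin d)) := ⟨1, 2, by norm_num, by norm_num⟩
  have hfs : ContDiff ℝ (⊤ : ℕ∞) f := f.contDiff
  let ψ : Fin d → EuclideanSpace ℝ (Fin d) → ℝ := fun j y => f y * y j
  have hψs : ∀ j, ContDiff ℝ (⊤ : ℕ∞) (ψ j) := fun j => hfs.mul (by fun_prop)
  have hψc : ∀ j, HasCompactSupport (ψ j) := fun j => f.hasCompactSupport.mul_right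
  have hDc : ∀ j, Continuous (fderiv ℝ (ψ j)) := fun j => (hψs j).continuous_fderiv (by simp)
  have hD0 : ∀ i j, fderiv ℝ (ψ j) 0 (EuclideanSpace.single i 1) = if i = j then 1 else 0 := by
    intro i j
    have h1 : ψ j =ᶠ[nhds 0] fun y => (EuclideanSpace.proj j : _ →L[ℝ] ℝ) y := by
      filter_upwards [f.eventuallyEq_one] with y hy
      simp [ψ, hy]
    rw [h1.fderiv_eq, ContinuousLinearMap.fderiv]
    simp [Pi.single_apply, eq_comm]
  have hDb : ∀ i j, ∃ C, ∀ x, ‖fderiv ℝ (ψ j) x (EuclideanSpace.single i 1)‖ ≤ C := by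
    intro i j
    obtain ⟨C, hC⟩ := ((hψc j).fderiv ℝ).exists_bound_of_continuous (hDc j)
    refine ⟨C * ‖(EuclideanSpace.single i 1 : EuclideanSpace ℝ (Fin d))‖, fun x => ?_⟩
    exact (ContinuousLinearMap.le_opNorm _ _).trans (by gcongr; exact hC x)
  choose C hC using hDb
  let c : ℕ → ℝ := fun n => 1 / ((n : ℝ) + 1)
  have hcpos : ∀ n, c n ≠ 0 := fun n => by positivity
  have hclim : Filter.Tendsto c Filter.atTop (nhds 0) := tendsto_one_div_add_atTop_nhds_zero_nat
  have hcx : ∀ x : EuclideanSpace ℝ (Fin d),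
      Filter.Tendsto (fun n => c n • x) Filter.atTop (nhds 0) := fun x => by
    simpa using hclim.smul_const x
  have key : ∀ n, -∫ ω, (∑ i, ∑ j, fderiv ℝ (ψ j) (c n • X t ω) (EuclideanSpace.single i 1)
              * Pmat (X t ω) i j) ∂P
          = ∫ ω, f (c n • X t ω) * inner ℝ (X t ω) (X'' t ω) ∂P := by
    intro n
    have h := hweak (fun y => f (c n • y) • y) ?_ ?_
    · have e : ∀ j x, fderiv ℝ (fun y => (f (c n • y) • y) j) x = fderiv ℝ (ψ j) (c n • x) := by
        intro j x
        have e1 : (fun y : EuclideanSpace ℝ (Fin d) => (f (c n • y) • y) j)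
            = fun y => (c n)⁻¹ * ψ j (c n • y) := by
          ext y
          simp only [ψ, PiLp.smul_apply, smul_eq_mul]
          field_simp [hcpos n]
        have hd1 : HasFDerivAt (ψ j) (fderiv ℝ (ψ j) (c n • x)) (c n • x) :=
          (((hψs j).differentiable (by simp)) _).hasFDerivAt
        have hd2 : HasFDerivAt (fun y : EuclideanSpace ℝ (Fin d) => c n • y)
            (c n • ContinuousLinearMap.id ℝ _) x := (hasFDerivAt_id x).const_smul (c n)
        have hd3 := (hd1.comp x hd2).const_mul (c n)⁻¹
        rw [e1]
        refine Eq.trans hd3.fderiv ?_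
        ext v
        simp [hcpos n]
      simp only [e] at h
      rw [h]
      congr 1
      ext ω
      rw [hinner, Finset.mul_sum]
      refine Finset.sum_congr rfl fun i _ => ?_
      simp only [PiLp.smul_apply, smul_eq_mul]
      ring
    · exact (hfs.comp (contDiff_const_smul (c n))).smul contDiff_id
    · exact HasCompactSupport.smul_right
        (f.hasCompactSupport.comp_homeomorph (Homeomorph.smulOfNeZero (c n) (hcpos n)))
  have hR : Filter.Tendsto (fun n => ∫ ω, f (c n • X t ω) * inner ℝ (X t ω) (X'' t ω) ∂P)
      Filter.atTop (nhds (∫ ω, inner ℝ (X t ω) (X'' t ω) ∂P)) := by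
    refine tendsto_integral_of_dominated_convergence _ (fun n => ?_) hXi.norm (fun n => ?_) ?_
    · exact ((f.continuous.measurable.comp ((hXmeas t).const_smul (c n))).mul
        ((hXmeas t).inner (hX''meas t))).aestronglyMeasurable
    · refine ae_of_all _ fun ω => ?_
      rw [norm_mul, Real.norm_of_nonneg f.nonneg]
      exact mul_le_of_le_one_left (norm_nonneg _) f.le_one
    · refine ae_of_all _ fun ω => ?_
      have h0 : f 0 = 1 := f.eventuallyEq_one.eq_of_nhds
      have := ((f.continuous.tendsto 0).comp (hcx (X t ω))).mul_const
        (inner ℝ (X t ω) (X'' t ω))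
      rw [h0, one_mul] at this
      exact this
  have hL : Filter.Tendsto (fun n => ∫ ω, (∑ i, ∑ j,
        fderiv ℝ (ψ j) (c n • X t ω) (EuclideanSpace.single i 1) * Pmat (X t ω) i j) ∂P)
      Filter.atTop (nhds (∫ ω, (∑ i, ∑ j, (if i = j then 1 else 0) * Pmat (X t ω) i j) ∂P)) := by
    refine tendsto_integral_of_dominated_convergence
      (fun ω => ∑ i, ∑ j, C i j * ‖Pmat (X t ω) i j‖) (fun n => ?_) ?_ (fun n => ?_) ?_
    · refine Measurable.aestronglyMeasurable ?_
      refine Finset.measurable_fun_sum _ fun i _ => Finset.measurable_fun_sum _ fun j _ => ?_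
      refine Measurable.mul ?_ ((hPmeas i j).comp (hXmeas t))
      exact ((hDc j).clm_apply continuous_const).measurable.comp ((hXmeas t).const_smul (c n))
    · exact integrable_finsetSum _ fun i _ => integrable_finsetSum _ fun j _ =>
        (hPi i j).norm.const_mul _
    · refine ae_of_all _ fun ω => ?_
      refine (norm_sum_le _ _).trans (Finset.sum_le_sum fun i _ => ?_)
      refine (norm_sum_le _ _).trans (Finset.sum_le_sum fun j _ => ?_)
      rw [norm_mul]
      gcongr
      exact hC i j _
    · refine ae_of_all _ fun ω => ?_
      refine tendsto_finsetSum _ fun i _ => tendsto_finsetSum _ fun j _ => ?_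
      rw [← hD0 i j]
      exact ((((hDc j).clm_apply continuous_const).tendsto 0).comp (hcx (X t ω))).mul_const _
  have hlim := tendsto_nhds_unique (hL.neg.congr key) hR
  have htr : 0 ≤ ∫ ω, (∑ i, ∑ j, (if i = j then 1 else 0) * Pmat (X t ω) i j) ∂P := by
    have : ∀ ω, (∑ i, ∑ j, (if i = j then 1 else 0) * Pmat (X t ω) i j)
        = ∑ i, Pmat (X t ω) i i := fun ω => by simp
    simp only [this]
    rw [integral_finsetSum _ fun i _ => hPi i i]
    exact Finset.sum_nonneg fun i _ => hdiag i
  simp only [hpath]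
  rw [integral_add (hXi.const_mul 2) (hX'2.const_mul 2), integral_const_mul, integral_const_mul]
  linarith
end
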